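/- Let (X, ω_X) and (Y, ω_Y) be networks, let φ : X → Y be any map, and let M = |X|. Then for every nonempty subset σ ⊆ X, the walk-length filtration values satisfy f_Y(φ(σ)) ≤ f_X(σ) + M · dis¹(φ), where φ(σ) = { φ(x) : x ∈ σ }. -/

import Mathlib

/-!
A walk through `σ` may use an edge arbitrarily often, so its weight alone does not control the
distortion of its image. However, it can be shortened: cut it at the first vertex lying in `σ`,
replace the piece before the cut by a simple path with the same endpoints (`exists_nodup_walk`;
deleting loops does not increase the weight), and continue from the cut with that vertex removed
from `σ`. A simple path uses each edge at most once, so mapping it by `φ` changes its weight by at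
most `dis¹(φ)` (`walkWeight_map_le`). There are at most `|σ| ≤ |X|` pieces, whence the additive
error `|X| · dis¹(φ)` (`exists_image_walk`).
-/

variable {X Y : Type*}

/-- The weight of a walk in a network (complete weighted digraph), given as a list of
vertices: the sum of the weights of consecutive pairs. -/
def walkWeight (ω : X → X → ℝ) (l : List X) : ℝ :=
  ((l.zip l.tail).map fun p => ω p.1 p.2).sum

/-- The walk-length filtration value of a set of vertices of a network: the infimum of the
weights of walks containing all vertices of `σ`. -/
noncomputable def wlf (ω : X → X → ℝ) (σ : Set X) : ℝ :=
  sInf {c | ∃ l : List X, l ≠ [] ∧ (∀ v ∈ σ, v ∈ l) ∧ walkWeight ω l = c}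

/-- The ℓ1-distortion of a map `φ : X → Y` between networks:
`dis¹(φ) = Σ_{x,x' ∈ X} |ω_X(x,x') − ω_Y(φ(x),φ(x'))|`. -/
noncomputable def dis1map [Fintype X] (ωX : X → X → ℝ) (ωY : Y → Y → ℝ) (φ : X → Y) : ℝ :=
  ∑ x : X, ∑ x' : X, |ωX x x' - ωY (φ x) (φ x')|

theorem walkWeight_cons_cons (ω : X → X → ℝ) (a b : X) (l : List X) :
    walkWeight ω (a :: b :: l) = ω a b + walkWeight ω (b :: l) := by
  simp [walkWeight]

theorem walkWeight_singleton (ω : X → X → ℝ) (a : X) : walkWeight ω [a] = 0 := by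
  simp [walkWeight]

theorem walkWeight_nonneg (ω : X → X → ℝ) (h : ∀ a b, 0 ≤ ω a b) (l : List X) :
    0 ≤ walkWeight ω l := by
  apply List.sum_nonneg
  simp only [List.mem_map]
  rintro _ ⟨p, _, rfl⟩
  exact h _ _

theorem walkWeight_append (ω : X → X → ℝ) (p : List X) (v : X) (q : List X) :
    walkWeight ω (p ++ v :: q) = walkWeight ω (p ++ [v]) + walkWeight ω (v :: q) := by
  induction p with
  | nil => simp [walkWeight_singleton]
  | cons a p ih =>
    cases p with
    | nil => simp [walkWeight_cons_cons, walkWeight_singleton]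
    | cons b p =>
      simp only [List.cons_append, walkWeight_cons_cons] at ih ⊢
      rw [ih, add_assoc]

theorem walkWeight_cons_le (ω : X → X → ℝ) (a : X) {l l' : List X} (hh : l.head? = l'.head?)
    (h : walkWeight ω l ≤ walkWeight ω l') : walkWeight ω (a :: l) ≤ walkWeight ω (a :: l') := by
  cases l with
  | nil =>
    cases l' with
    | nil => exact le_rfl
    | cons c l' => simp at hh
  | cons b l =>
    cases l' with
    | nil => simp at hh
    | cons c l' =>
      simp only [List.head?_cons, Option.some.injEq] at hh
      subst hh
      simp only [walkWeight_cons_cons]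
      gcongr

/-- Every walk ending at `v` can be shortened to a simple path with the same endpoints and no
larger weight. -/
theorem exists_nodup_walk (ω : X → X → ℝ) (h0 : ∀ a b, 0 ≤ ω a b) (v : X) (l : List X) :
    ∃ p : List X, (p ++ [v]).Nodup ∧ (p ++ [v]).head? = (l ++ [v]).head? ∧
      walkWeight ω (p ++ [v]) ≤ walkWeight ω (l ++ [v]) := by
  induction l with
  | nil => exact ⟨[], by simp, rfl, le_rfl⟩
  | cons a l ih =>
    obtain ⟨p, hn, hh, hw⟩ := ih
    have hw' := walkWeight_cons_le ω a hh hw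
    by_cases hav : a = v
    · subst hav
      refine ⟨[], by simp, by simp, ?_⟩
      simpa [walkWeight_singleton] using walkWeight_nonneg ω h0 (a :: (l ++ [a]))
    by_cases hap : a ∈ p
    · -- the path returns to `a`, so the loop before that return is deleted
      obtain ⟨s, t, rfl⟩ := List.append_of_mem hap
      refine ⟨a :: t, ?_, by simp, ?_⟩
      · rw [List.append_assoc] at hn
        exact hn.of_append_right
      · refine le_trans ?_ hw'
        have := walkWeight_append ω (a :: s) a (t ++ [v])
        have h1 := walkWeight_nonneg ω h0 (a :: s ++ [a])
        simp only [List.cons_append, List.append_assoc] at this h1 ⊢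
        linarith
    · exact ⟨a :: p, by simpa [hav, hap] using hn, by simp, hw'⟩

theorem dis1map_nonneg [Fintype X] (ωX : X → X → ℝ) (ωY : Y → Y → ℝ) (φ : X → Y) :
    0 ≤ dis1map ωX ωY φ :=
  Finset.sum_nonneg fun _ _ => Finset.sum_nonneg fun _ _ => abs_nonneg _

/-- A simple path uses every edge at most once, so its image gains at most the distortion. -/
theorem walkWeight_map_le [Fintype X] (ωX : X → X → ℝ) (ωY : Y → Y → ℝ) (φ : X → Y)
    {l : List X} (hl : l.Nodup) :
    walkWeight ωY (l.map φ) ≤ walkWeight ωX l + dis1map ωX ωY φ := by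
  classical
  -- the second coordinates of the edges form `l.tail`, so the edges are distinct
  have hz : (l.zip l.tail).Nodup := by
    apply List.Nodup.of_map Prod.snd
    rw [List.map_snd_zip (by simp)]
    exact hl.tail
  have h1 : walkWeight ωY (l.map φ) =
      ((l.zip l.tail).map fun p => ωY (φ p.1) (φ p.2)).sum := by
    simp [walkWeight, ← List.map_tail, List.zip_map, Function.comp_def]
  rw [h1, walkWeight, dis1map, ← Fintype.sum_prod_type',
    ← List.sum_toFinset _ hz, ← List.sum_toFinset _ hz]
  calc _ ≤ ∑ p ∈ (l.zip l.tail).toFinset,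
        (ωX p.1 p.2 + |ωX p.1 p.2 - ωY (φ p.1) (φ p.2)|) := by
        apply Finset.sum_le_sum
        intro p _
        linarith [neg_le_abs (ωX p.1 p.2 - ωY (φ p.1) (φ p.2))]
    _ ≤ _ := by
        rw [Finset.sum_add_distrib]
        gcongr
        exact Finset.subset_univ _

/-- Splits a list at its first element lying in `T`. -/
theorem exists_first_mem (T : Finset X) (l : List X) (h : ∃ x ∈ l, x ∈ T) :
    ∃ s v t, l = s ++ v :: t ∧ v ∈ T ∧ ∀ x ∈ s, x ∉ T := by
  induction l with
  | nil => simp at h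
  | cons a l ih =>
    by_cases ha : a ∈ T
    · exact ⟨[], a, l, rfl, ha, by simp⟩
    · obtain ⟨s, v, t, rfl, hv, hs⟩ := ih (by simpa [ha] using h)
      exact ⟨a :: s, v, t, rfl, hv, by simpa [ha] using hs⟩

/-- A walk through the vertices of `T` can be replaced by one with the same start, still passing
through `T`, whose image costs at most `dis¹(φ)` more per vertex of `T`. Keeping the start is what
allows the pieces to be concatenated. -/
theorem exists_image_walk [Fintype X] (ωX : X → X → ℝ) (ωY : Y → Y → ℝ)
    (h0 : ∀ a b, 0 ≤ ωX a b) (φ : X → Y) (n : ℕ) :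
    ∀ (T : Finset X), T.card = n → ∀ (a : X) (l : List X), (∀ v ∈ T, v ∈ a :: l) →
      ∃ l' : List X, (∀ v ∈ T, v ∈ a :: l') ∧
        walkWeight ωY ((a :: l').map φ) ≤ walkWeight ωX (a :: l) + n * dis1map ωX ωY φ := by
  classical
  induction n with
  | zero =>
    intro T hT a l _
    rw [Finset.card_eq_zero] at hT
    subst hT
    exact ⟨[], by simp, by simpa [walkWeight_singleton] using walkWeight_nonneg ωX h0 (a :: l)⟩
  | succ n ih =>
    intro T hT a l hl
    obtain ⟨x, hx⟩ : T.Nonempty := Finset.card_pos.mp (by omega)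
    obtain ⟨s, v, t, hst, hv, hs⟩ := exists_first_mem T (a :: l) ⟨x, hl x hx, hx⟩
    obtain ⟨q, hq, hqw⟩ := ih (T.erase v) (by rw [Finset.card_erase_of_mem hv]; omega) v t (by
      intro w hw
      have hwT := Finset.mem_of_mem_erase hw
      have := hl w hwT
      rw [hst, List.mem_append] at this
      exact this.resolve_left fun h => hs w h hwT)
    obtain ⟨p, hn, hh, hw⟩ := exists_nodup_walk ωX h0 v s
    have hd := walkWeight_map_le ωX ωY φ hn
    have hhead : (p ++ v :: q).head? = some a := by
      have h1 : (p ++ v :: q).head? = (p ++ [v]).head? := by cases p <;> simp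
      have h2 : (s ++ v :: t).head? = (s ++ [v]).head? := by cases s <;> simp
      rw [h1, hh, ← h2, ← hst, List.head?_cons]
    obtain ⟨l', hl'⟩ := List.head?_eq_some_iff.mp hhead
    refine ⟨l', ?_, ?_⟩
    · intro w hw
      rw [← hl', List.mem_append]
      right
      by_cases hwv : w = v
      · simp [hwv]
      · exact hq w (Finset.mem_erase.mpr ⟨hwv, hw⟩)
    · rw [← hl', hst, walkWeight_append ωX s v t, List.map_append, List.map_cons,
        walkWeight_append ωY]
      simp only [List.map_append, List.map_cons, List.map_nil] at hd hqw
      push_cast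
      linarith

/-- For networks `(X, ω_X)`, `(Y, ω_Y)`, any map `φ : X → Y`, and `M = |X|`: for every
nonempty `σ ⊆ X`, `f_Y(φ(σ)) ≤ f_X(σ) + M · dis¹(φ)`. -/
theorem stmt11 [Fintype X] [Fintype Y] [Nonempty X] [Nonempty Y]
    (ωX : X → X → ℝ) (ωY : Y → Y → ℝ)
    (hX0 : ∀ a b, 0 ≤ ωX a b) (hXz : ∀ a b, ωX a b = 0 ↔ a = b)
    (hY0 : ∀ a b, 0 ≤ ωY a b) (hYz : ∀ a b, ωY a b = 0 ↔ a = b)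
    (φ : X → Y) (σ : Set X) (hσ : σ.Nonempty) :
    wlf ωY (φ '' σ) ≤ wlf ωX σ + (Fintype.card X : ℝ) * dis1map ωX ωY φ := by
  classical
  rw [← sub_le_iff_le_add]
  apply le_csInf
  · -- a list of all vertices of `X` is a walk through `σ`
    exact ⟨_, Finset.univ.toList, by simp [Finset.univ_nonempty.ne_empty], by simp, rfl⟩
  rintro _ ⟨l, hne, hl, rfl⟩
  rw [sub_le_iff_le_add]
  obtain ⟨a, l, rfl⟩ := List.exists_cons_of_ne_nil hne
  obtain ⟨l', hm, hw⟩ := exists_image_walk ωX ωY hX0 φ _ σ.toFinset rfl a l (by simpa using hl)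
  have hcard : (σ.toFinset.card : ℝ) ≤ Fintype.card X := by
    exact_mod_cast Finset.card_le_univ _
  have hmul := mul_le_mul_of_nonneg_right hcard (dis1map_nonneg ωX ωY φ)
  have hinf : wlf ωY (φ '' σ) ≤ walkWeight ωY ((a :: l').map φ) := by
    apply csInf_le
    · refine ⟨0, ?_⟩
      rintro _ ⟨m, _, _, rfl⟩
      exact walkWeight_nonneg ωY hY0 m
    · refine ⟨_, by simp, ?_, rfl⟩
      rintro _ ⟨x, hx, rfl⟩
      exact List.mem_map_of_mem (hm x (by simpa using hx))
  linarith
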